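/- arXiv:1410.2639 — 3 statements merged into one kernel-verified Lean document; each statement's English description precedes it below -/
import Mathlib

section
/- Let f : ℝ → ℝ be a measurable probability density (f ≥ 0 and ∫_ℝ f(z) dz = 1) with cumulative distribution function F(y) = ∫_{−∞}^{y} f(z) dz, and fix an integer N ≥ 2 and T > 1. For data x = (x₁, …, x_N) ∈ ℝᴺ define the normalizing integral A(x) = ∫₀^∞ ∫_ℝ σ^{−(N+1)} ∏_{i=1}^{N} f((x_i − μ)/σ) dμ dσ and the predictive tail integral B(y, x) = ∫₀^∞ ∫_ℝ σ^{−(N+1)} ∏_{i=1}^{N} f((x_i − μ)/σ) · (1 − F((y − μ)/σ)) dμ dσ, corresponding to the improper prior dμ dσ/σ on the location–scale parameters. Assume that for almost every data vector x (with respect to the i.i.d. sampling law below) one has 0 < A(x) < ∞ and the map y ↦ B(y, x)/A(x) is continuous and strictly decreasing where it takes values in (0,1), tending to 1 as y → −∞ and to 0 as y → +∞, and let x_T(x) be the unique solution of B(x_T(x), x)/A(x) = 1/T, chosen measurably in x. Then this Bayesian predictor is probability-preserving at every parameter: for every μ* ∈ ℝ and σ* > 0, if X₁, …, X_N, X_{N+1}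 are i.i.d. with density x ↦ σ*^{−1} f((x − μ*)/σ*), then P(X_{N+1} > x_T(X₁, …, X_N)) = 1/T. -/
open MeasureTheory Set Filter

/-- The law of a single observation from the location–scale family generated by a density `f`:
the measure on `ℝ` with density `x ↦ σ⁻¹ f((x - μ)/σ)` with respect to Lebesgue measure. -/
noncomputable def locScaleLaw (f : ℝ → ℝ) (μ σ : ℝ) : Measure ℝ :=
  volume.withDensity fun x => ENNReal.ofReal (σ⁻¹ * f ((x - μ) / σ))

open scoped ENNReal

lemma aux_lint_prod : ∀ (n : ℕ) (g : Fin n → ℝ → ℝ≥0∞), (∀ i, Measurable (g i)) →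
    ∫⁻ x : Fin n → ℝ, ∏ i, g i (x i) = ∏ i, ∫⁻ t, g i t := by
  intro n
  induction n with
  | zero => intro g _; simp [volume_pi]
  | succ n ih =>
    intro g hg
    have h := (measurePreserving_piFinSuccAbove (fun _ : Fin (n+1) => (volume : Measure ℝ)) 0)
    rw [volume_pi, (h.symm).lintegral_map_equiv]
    rw [lintegral_prod]
    · simp only [MeasurableEquiv.piFinSuccAbove_symm_apply, Fin.insertNthEquiv,
        Fin.prod_univ_succ, Fin.insertNth_zero, Equiv.coe_fn_mk, Fin.cons_succ,
        Fin.zero_succAbove, Fin.cons_zero]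
      have : ∀ t : ℝ, ∫⁻ y : Fin n → ℝ, g 0 t * ∏ i : Fin n, g i.succ (y i) ∂(Measure.pi fun _ => volume)
          = g 0 t * ∏ i : Fin n, ∫⁻ s, g i.succ s := by
        intro t
        rw [lintegral_const_mul]
        · rw [← ih _ (fun i => hg i.succ), volume_pi]
        · exact Finset.measurable_prod _ fun i _ => (hg _).comp (measurable_pi_apply i)
      erw [lintegral_congr this]
      rw [lintegral_mul_const _ (hg 0)]
    · apply Measurable.aemeasurable
      apply Measurable.comp (g := fun x : Fin (n+1) → ℝ => ∏ i, g i (x i)) _ (MeasurableEquiv.measurable _)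
      exact Finset.measurable_prod _ fun i _ => (hg _).comp (measurable_pi_apply i)

lemma aux_pi_density (n : ℕ) (g : ℝ → ℝ≥0∞) (hg : Measurable g)
    [SigmaFinite (volume.withDensity g)] :
    (Measure.pi fun _ : Fin n => volume.withDensity g) =
      (volume : Measure (Fin n → ℝ)).withDensity fun x => ∏ i, g (x i) := by
  refine Measure.pi_eq fun s hs => ?_
  rw [withDensity_apply _ (MeasurableSet.univ_pi hs), ← lintegral_indicator (MeasurableSet.univ_pi hs)]
  simp only [withDensity_apply _ (hs _), ← lintegral_indicator (hs _)]
  rw [← aux_lint_prod n _ fun i => hg.indicator (hs i)]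
  congr 1
  ext x
  by_cases hx : x ∈ Set.univ.pi s
  · rw [indicator_of_mem hx]
    exact Finset.prod_congr rfl fun i _ => (indicator_of_mem (hx i (mem_univ _)) _).symm
  · rw [indicator_of_notMem hx]
    simp only [Set.mem_pi, mem_univ, true_implies, not_forall] at hx
    obtain ⟨i, hi⟩ := hx
    exact (Finset.prod_eq_zero (Finset.mem_univ i) (indicator_of_notMem hi _)).symm

lemma aux_law_lint (f : ℝ → ℝ) (hf : Measurable f) (μ σ : ℝ) (hσ : 0 < σ) :
    locScaleLaw f μ σ = (locScaleLaw f 0 1).map (fun t => μ + σ * t) := by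
  have hm : Measurable (fun t : ℝ => μ + σ * t) := by fun_prop
  ext s hs
  rw [Measure.map_apply hm hs]
  unfold locScaleLaw
  rw [withDensity_apply _ hs, withDensity_apply _ (hm hs), ← lintegral_indicator hs,
    ← lintegral_indicator (hm hs)]
  have h1 : Measure.map (fun t : ℝ => μ + σ * t) volume = ENNReal.ofReal (σ⁻¹) • volume := by
    have : (fun t : ℝ => μ + σ * t) = (fun t => μ + t) ∘ (fun t => σ * t) := rfl
    rw [this, ← Measure.map_map (by fun_prop) (by fun_prop), Real.map_volume_mul_left hσ.ne',
      Measure.map_smul, map_add_left_eq_self, abs_of_pos (inv_pos.2 hσ)]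
  have h2 : (volume : Measure ℝ) = ENNReal.ofReal σ • Measure.map (fun t : ℝ => μ + σ * t) volume := by
    rw [h1, smul_smul, ← ENNReal.ofReal_mul hσ.le, mul_inv_cancel₀ hσ.ne']; simp
  have hmm : Measurable (s.indicator fun x => ENNReal.ofReal (σ⁻¹ * f ((x - μ) / σ))) :=
    Measurable.indicator (by fun_prop) hs
  conv_lhs => rw [h2]
  rw [lintegral_smul_measure, lintegral_map hmm hm, smul_eq_mul,
    ← lintegral_const_mul _ (show Measurable fun a => s.indicator (fun x => ENNReal.ofReal (σ⁻¹ * f ((x - μ) / σ))) (μ + σ * a) from hmm.comp hm)]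
  congr 1
  ext t
  by_cases ht : μ + σ * t ∈ s
  · rw [indicator_of_mem ht, indicator_of_mem (show t ∈ (fun t : ℝ => μ + σ * t) ⁻¹' s from ht),
      ← ENNReal.ofReal_mul hσ.le]
    congr 1
    rw [← mul_assoc, mul_inv_cancel₀ hσ.ne']
    rw [one_mul, inv_one, one_mul, sub_zero, div_one, add_sub_cancel_left,
      mul_div_cancel_left₀ _ hσ.ne']
  · rw [indicator_of_notMem ht, indicator_of_notMem (show t ∉ (fun t : ℝ => μ + σ * t) ⁻¹' s from ht)]
    simp

lemma aux_subst (H : ℝ → ℝ → ℝ) (a b : ℝ) (hb : 0 < b) :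
    ∫ σ in Ioi (0:ℝ), ∫ μ, H σ μ = b * b * ∫ σ in Ioi (0:ℝ), ∫ μ, H (b * σ) (a + b * μ) := by
  have h1 : ∀ σ, ∫ μ, H σ (a + b * μ) = b⁻¹ * ∫ μ, H σ μ := by
    intro σ
    rw [Measure.integral_comp_mul_left (fun t => H σ (a + t)) b, abs_of_pos (inv_pos.2 hb),
      integral_add_left_eq_self (fun t => H σ t) a, smul_eq_mul]
  simp only [h1]
  rw [integral_comp_mul_left_Ioi (fun s => b⁻¹ * ∫ μ, H s μ) 0 hb, mul_zero, integral_const_mul,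
    smul_eq_mul]
  field_simp

lemma aux_inv (d : ℝ) (hd : 0 < d) :
    ∫⁻ σ in Ioi (0:ℝ), ENNReal.ofReal σ⁻¹ * (Icc 1 (Real.exp 1)).indicator 1 (σ * d) = 1 := by
  have he : (1:ℝ) ≤ Real.exp 1 := by have := Real.add_one_le_exp (1:ℝ); linarith
  have h0 : 0 < 1 / d := by positivity
  have hle : 1 / d ≤ Real.exp 1 / d := by gcongr
  rw [← lintegral_indicator measurableSet_Ioi]
  have : ∀ σ : ℝ, (Ioi (0:ℝ)).indicator (fun σ => ENNReal.ofReal σ⁻¹ * (Icc 1 (Real.exp 1)).indicator 1 (σ * d)) σ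
      = (Icc (1 / d) (Real.exp 1 / d)).indicator (fun σ => ENNReal.ofReal σ⁻¹) σ := by
    intro σ
    have hi : σ * d ∈ Icc 1 (Real.exp 1) ↔ σ ∈ Icc (1 / d) (Real.exp 1 / d) := by
      simp only [mem_Icc, div_le_iff₀ hd, le_div_iff₀ hd]
    by_cases h : σ ∈ Icc (1 / d) (Real.exp 1 / d)
    · rw [indicator_of_mem h, indicator_of_mem (show σ ∈ Ioi (0:ℝ) from h0.trans_le h.1),
        indicator_of_mem (hi.2 h)]
      simp
    · rw [indicator_of_notMem h]
      simp only [indicator_apply, hi, h, if_false, mul_zero, ite_self]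
  rw [lintegral_congr this, lintegral_indicator measurableSet_Icc]
  rw [← ofReal_integral_eq_lintegral_ofReal]
  · rw [integral_Icc_eq_integral_Ioc, ← intervalIntegral.integral_of_le hle,
      integral_inv_of_pos h0 (by positivity)]
    have : Real.exp 1 / d / (1 / d) = Real.exp 1 := by field_simp
    rw [this, Real.log_exp]; simp
  · apply ContinuousOn.integrableOn_Icc
    exact ContinuousOn.inv₀ continuousOn_id fun x hx => (h0.trans_le hx.1).ne'
  · filter_upwards [ae_restrict_mem measurableSet_Icc] with x hx
    exact inv_nonneg.2 (h0.trans_le hx.1).le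

lemma aux_ne {n : ℕ} (i j : Fin n) (hij : i ≠ j) :
    ∀ᵐ x : Fin n → ℝ, x i ≠ x j := by
  let l : (Fin n → ℝ) →ₗ[ℝ] ℝ := LinearMap.proj (R := ℝ) (φ := fun _ : Fin n => ℝ) i - LinearMap.proj (R := ℝ) (φ := fun _ : Fin n => ℝ) j
  have h := Measure.addHaar_submodule (volume : Measure (Fin n → ℝ)) (LinearMap.ker l) (by
    intro h
    have : Pi.single i (1:ℝ) ∈ LinearMap.ker l := by rw [h]; trivial
    simp [l, hij.symm] at this)
  refine measure_mono_null (fun x hx => ?_) h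
  simpa [l, sub_eq_zero] using hx

lemma aux_prob (f : ℝ → ℝ) (hf0 : ∀ z, 0 ≤ f z) (hf1 : ∫ z, f z = 1) :
    IsProbabilityMeasure (locScaleLaw f 0 1) := by
  constructor
  have hi : Integrable f := by
    by_contra h
    rw [integral_undef h] at hf1
    exact zero_ne_one hf1
  simp only [locScaleLaw, withDensity_apply _ MeasurableSet.univ, Measure.restrict_univ, inv_one,
    one_mul, sub_zero, div_one]
  rw [← ofReal_integral_eq_lintegral_ofReal hi (Eventually.of_forall hf0), hf1, ENNReal.ofReal_one]

lemma aux_prob2 (f : ℝ → ℝ) (hf : Measurable f) (hf0 : ∀ z, 0 ≤ f z) (hf1 : ∫ z, f z = 1)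
    (μ σ : ℝ) (hσ : 0 < σ) : IsProbabilityMeasure (locScaleLaw f μ σ) := by
  have := aux_prob f hf0 hf1
  rw [aux_law_lint f hf μ σ hσ]
  exact Measure.isProbabilityMeasure_map (by fun_prop)

lemma aux_pi_map (n : ℕ) (f : ℝ → ℝ) (hf : Measurable f) (hf0 : ∀ z, 0 ≤ f z) (hf1 : ∫ z, f z = 1)
    (μ σ : ℝ) (hσ : 0 < σ) :
    (Measure.pi fun _ : Fin n => locScaleLaw f μ σ) =
      (Measure.pi fun _ : Fin n => locScaleLaw f 0 1).map (fun z i => μ + σ * z i) := by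
  have := aux_prob f hf0 hf1
  have h2 : IsProbabilityMeasure ((locScaleLaw f 0 1).map (fun t => μ + σ * t)) :=
    Measure.isProbabilityMeasure_map (by fun_prop)
  rw [Measure.pi_map_pi (μ := fun _ : Fin n => locScaleLaw f 0 1)
    (f := fun _ t => μ + σ * t) (fun i => by fun_prop)]
  rw [aux_law_lint f hf μ σ hσ]

noncomputable def auxM : Measure (ℝ × ℝ) := (volume.restrict (Ioi (0:ℝ))).prod (volume : Measure ℝ)

instance : SFinite auxM := by unfold auxM; infer_instance

lemma auxM_pos : ∀ᵐ p ∂auxM, 0 < p.1 := by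
  have h : ∀ᵐ s ∂(volume.restrict (Ioi (0:ℝ))), 0 < s := ae_restrict_mem measurableSet_Ioi
  exact Measure.quasiMeasurePreserving_fst.ae h

lemma auxM_eq : auxM = (volume : Measure (ℝ × ℝ)).restrict (Ioi (0:ℝ) ×ˢ (univ : Set ℝ)) := by
  rw [auxM, Measure.volume_eq_prod, ← Measure.prod_restrict, Measure.restrict_univ]

noncomputable def auxK (n : ℕ) (f : ℝ → ℝ) (p : ℝ × ℝ) (x : Fin n → ℝ) : ℝ :=
  p.1 ^ (-(n : ℤ) - 1) * ∏ i : Fin n, f ((x i - p.2) / p.1)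

lemma auxK_meas (n : ℕ) (f : ℝ → ℝ) (hf : Measurable f) :
    Measurable (fun q : (Fin n → ℝ) × (ℝ × ℝ) => auxK n f q.2 q.1) := by
  unfold auxK
  apply Measurable.mul
  · have : Measurable (fun t : ℝ => t ^ (-(n : ℤ) - 1)) := by
      have he : (fun t : ℝ => t ^ (-(n : ℤ) - 1)) = fun t => (t ^ (n+1))⁻¹ := by
        ext t
        rw [show (-(n : ℤ) - 1) = -((n+1 : ℕ) : ℤ) by push_cast; ring, zpow_neg, zpow_natCast]
      rw [he]; fun_prop
    exact this.comp (by fun_prop)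
  · exact Finset.measurable_prod _ fun i _ => by fun_prop

lemma auxK_eq (n : ℕ) (f : ℝ → ℝ) (hf0 : ∀ z, 0 ≤ f z) (p : ℝ × ℝ) (hp : 0 < p.1) (x : Fin n → ℝ) :
    ENNReal.ofReal (auxK n f p x) = ENNReal.ofReal p.1⁻¹ *
      ∏ i, ENNReal.ofReal (p.1⁻¹ * f ((x i - p.2) / p.1)) := by
  rw [← ENNReal.ofReal_prod_of_nonneg (fun i _ => mul_nonneg (inv_nonneg.2 hp.le) (hf0 _)),
    ← ENNReal.ofReal_mul (inv_nonneg.2 hp.le), Finset.prod_mul_distrib, Finset.prod_const,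
    Finset.card_univ, Fintype.card_fin, auxK, ← mul_assoc]
  congr 2
  rw [show (-(n : ℤ) - 1) = -((n+1 : ℕ) : ℤ) by push_cast; ring, zpow_neg, zpow_natCast, pow_succ',
    inv_pow, mul_inv]

lemma aux_key (n : ℕ) (f : ℝ → ℝ) (hf : Measurable f) (hf0 : ∀ z, 0 ≤ f z) (hf1 : ∫ z, f z = 1)
    (h : (Fin n → ℝ) → ℝ × ℝ → ℝ≥0∞) (hh : Measurable (Function.uncurry h)) :
    ∫⁻ x, ∫⁻ p, ENNReal.ofReal (auxK n f p x) * h x p ∂auxM =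
      ∫⁻ p, ENNReal.ofReal p.1⁻¹ *
        ∫⁻ z, h (fun i => p.2 + p.1 * z i) p ∂(Measure.pi fun _ : Fin n => locScaleLaw f 0 1) ∂auxM := by
  rw [lintegral_lintegral_swap]
  swap
  · exact (((auxK_meas n f hf).ennreal_ofReal).mul hh).aemeasurable
  apply lintegral_congr_ae
  filter_upwards [auxM_pos] with p hp
  have := aux_prob2 f hf hf0 hf1 p.2 p.1 hp
  have hhp : Measurable (fun x => h x p) := hh.comp (measurable_id.prodMk measurable_const)
  rw [← lintegral_map (μ := Measure.pi fun _ : Fin n => locScaleLaw f 0 1)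
      (f := fun x => h x p) (g := fun z i => p.2 + p.1 * z i) hhp (by fun_prop),
    ← aux_pi_map n f hf hf0 hf1 p.2 p.1 hp]
  unfold locScaleLaw at this ⊢
  have hd : Measurable (fun x : Fin n → ℝ => ∏ i, ENNReal.ofReal (p.1⁻¹ * f ((x i - p.2) / p.1))) :=
    Finset.measurable_prod _ fun i _ => by fun_prop
  rw [aux_pi_density n _ (by fun_prop), lintegral_withDensity_eq_lintegral_mul _ hd hhp,
    ← lintegral_const_mul _ (hd.mul hhp)]
  congr 1
  ext x
  rw [auxK_eq n f hf0 p hp, mul_assoc]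
  rfl

noncomputable def auxPsi {n : ℕ} (i j : Fin n) (x : Fin n → ℝ) : ℝ≥0∞ :=
  (Icc (0:ℝ) 1).indicator 1 (x i) * (Icc 1 (Real.exp 1)).indicator 1 (|x j - x i|)

lemma auxPsi_meas {n : ℕ} (i j : Fin n) : Measurable (auxPsi i j) := by
  unfold auxPsi
  apply Measurable.mul
  · exact (measurable_one.indicator measurableSet_Icc).comp (measurable_pi_apply i)
  · exact (measurable_one.indicator measurableSet_Icc).comp (by fun_prop)

lemma auxPsi_int {n : ℕ} (i j : Fin n) (z : Fin n → ℝ) (hz : z i ≠ z j) :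
    ∫⁻ p, ENNReal.ofReal p.1⁻¹ * auxPsi i j (fun k => p.2 + p.1 * z k) ∂auxM = 1 := by
  have hm : Measurable (fun p : ℝ × ℝ => ENNReal.ofReal p.1⁻¹ * auxPsi i j (fun k => p.2 + p.1 * z k)) := by
    apply Measurable.mul (by fun_prop)
    exact (auxPsi_meas i j).comp (by fun_prop)
  rw [auxM, lintegral_prod _ hm.aemeasurable]
  have hd : 0 < |z j - z i| := abs_pos.2 (sub_ne_zero.2 hz.symm)
  rw [← aux_inv _ hd]
  apply setLIntegral_congr_fun measurableSet_Ioi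
  intro s hs
  have hs : 0 < s := hs
  have h1 : ∀ m : ℝ, |m + s * z j - (m + s * z i)| = s * |z j - z i| := by
    intro m
    rw [← abs_of_pos hs, ← abs_mul, abs_of_pos hs]; congr 1; ring
  simp only [auxPsi, h1]
  have h2 : ∫⁻ m : ℝ, (Icc (0:ℝ) 1).indicator (1 : ℝ → ℝ≥0∞) (m + s * z i) = 1 := by
    rw [lintegral_add_right_eq_self (fun m => (Icc (0:ℝ) 1).indicator (1 : ℝ → ℝ≥0∞) m) (s * z i)]
    rw [lintegral_indicator_one measurableSet_Icc]; simp
  have h3 : Measurable fun m : ℝ => (Icc (0:ℝ) 1).indicator (1 : ℝ → ℝ≥0∞) (m + s * z i) :=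
    (measurable_one.indicator measurableSet_Icc).comp (by fun_prop)
  rw [lintegral_const_mul _ (h3.mul_const _), lintegral_mul_const _ h3, h2, one_mul]

/-- The Bayesian predictor for a location–scale family under the improper prior `dμ dσ/σ`
is probability-preserving at every parameter `(μ*, σ*)`: the next i.i.d. sample exceeds the
level-`T` Bayesian prediction with probability exactly `1/T`. -/
theorem bayes_locScale_predictor_probability_preserving
    {N : ℕ} (hN : 2 ≤ N)
    (f : ℝ → ℝ) (hf_meas : Measurable f) (hf_nonneg : ∀ z, 0 ≤ f z)
    (hf_int : ∫ z, f z = 1)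
    (F : ℝ → ℝ) (hF : ∀ y, F y = ∫ z in Iic y, f z)
    (T : ℝ) (hT : 1 < T)
    (A : (Fin N → ℝ) → ℝ) (B : ℝ → (Fin N → ℝ) → ℝ)
    (hA : ∀ x : Fin N → ℝ,
      A x = ∫ σ in Ioi (0 : ℝ), ∫ μ : ℝ,
        σ ^ (-(N : ℤ) - 1) * ∏ i : Fin N, f ((x i - μ) / σ))
    (hB : ∀ (y : ℝ) (x : Fin N → ℝ),
      B y x = ∫ σ in Ioi (0 : ℝ), ∫ μ : ℝ,
        σ ^ (-(N : ℤ) - 1) * (∏ i : Fin N, f ((x i - μ) / σ)) * (1 - F ((y - μ) / σ)))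
    (xT : (Fin N → ℝ) → ℝ) (hxT_meas : Measurable xT)
    (h_ae : ∀ (μs σs : ℝ), 0 < σs →
      ∀ᵐ x ∂(Measure.pi fun _ : Fin N => locScaleLaw f μs σs),
        (0 < A x) ∧
        (IntegrableOn
          (fun p : ℝ × ℝ => p.1 ^ (-(N : ℤ) - 1) * ∏ i : Fin N, f ((x i - p.2) / p.1))
          (Ioi (0 : ℝ) ×ˢ (univ : Set ℝ))) ∧
        Continuous (fun y => B y x / A x) ∧
        StrictAntiOn (fun y => B y x / A x) {y | B y x / A x ∈ Ioo (0 : ℝ) 1} ∧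
        Tendsto (fun y => B y x / A x) atBot (nhds 1) ∧
        Tendsto (fun y => B y x / A x) atTop (nhds 0) ∧
        B (xT x) x / A x = 1 / T) :
    ∀ (μs σs : ℝ), 0 < σs →
      (Measure.pi fun _ : Fin (N + 1) => locScaleLaw f μs σs)
        {z | xT (fun i : Fin N => z i.castSucc) < z (Fin.last N)}
      = ENNReal.ofReal (1 / T) := by
  have hP := aux_prob f hf_nonneg hf_int
  set P : Measure (Fin N → ℝ) := Measure.pi fun _ : Fin N => locScaleLaw f 0 1 with hPdef
  have hfi : Integrable f := by
    by_contra h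
    rw [integral_undef h] at hf_int
    exact zero_ne_one hf_int
  have hFmono : Monotone F := by
    intro a b hab
    rw [hF, hF]
    exact setIntegral_mono_set hfi.integrableOn (Eventually.of_forall hf_nonneg)
      (Iic_subset_Iic.2 hab).eventuallyLE
  have hFm : Measurable F := hFmono.measurable
  have hF0 : ∀ y, 0 ≤ F y := fun y => by
    rw [hF]; exact integral_nonneg hf_nonneg
  have hF1 : ∀ y, F y ≤ 1 := fun y => by
    rw [hF, ← hf_int]
    exact setIntegral_le_integral hfi (Eventually.of_forall hf_nonneg)
  have hGlaw : ∀ y, locScaleLaw f 0 1 (Ioi y) = ENNReal.ofReal (1 - F y) := by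
    intro y
    have h1 : 1 - F y = ∫ z in Ioi y, f z := by
      have := integral_add_compl (measurableSet_Iic (a := y)) hfi
      rw [compl_Iic, hf_int, ← hF] at this
      linarith
    rw [h1, ofReal_integral_eq_lintegral_ofReal hfi.integrableOn (Eventually.of_forall hf_nonneg),
      locScaleLaw, withDensity_apply _ measurableSet_Ioi]
    simp
  have hTpos : 0 < T := by linarith
  -- equivariance
  have hAeq : ∀ (a b : ℝ), 0 < b → ∀ x : Fin N → ℝ,
      A (fun i => a + b * x i) = (b * b * b ^ (-(N : ℤ) - 1)) * A x := by
    intro a b hb x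
    rw [hA, hA, aux_subst _ a b hb, mul_assoc (b * b) (b ^ (-(N : ℤ) - 1))]
    congr 1
    rw [← integral_const_mul]
    refine integral_congr_ae (Eventually.of_forall fun s => ?_)
    dsimp only
    rw [← integral_const_mul]
    congr 1
    ext m
    rw [mul_zpow, mul_assoc]
    congr 2
    refine Finset.prod_congr rfl fun i _ => ?_
    rw [show a + b * x i - (a + b * m) = b * (x i - m) by ring, mul_div_mul_left _ _ hb.ne']
  have hBeq : ∀ (a b : ℝ), 0 < b → ∀ (y : ℝ) (x : Fin N → ℝ),
      B (a + b * y) (fun i => a + b * x i) = (b * b * b ^ (-(N : ℤ) - 1)) * B y x := by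
    intro a b hb y x
    rw [hB, hB, aux_subst _ a b hb, mul_assoc (b * b) (b ^ (-(N : ℤ) - 1))]
    congr 1
    rw [← integral_const_mul]
    refine integral_congr_ae (Eventually.of_forall fun s => ?_)
    dsimp only
    rw [← integral_const_mul]
    congr 1
    ext m
    have h : ∀ t, (a + b * t - (a + b * m)) / (b * s) = (t - m) / s := by
      intro t
      rw [show a + b * t - (a + b * m) = b * (t - m) by ring, mul_div_mul_left _ _ hb.ne']
    simp only [h, mul_zpow]
    ring
  have hxTeq : ∀ (a b : ℝ), 0 < b → ∀ᵐ z ∂P, xT (fun i => a + b * z i) = a + b * xT z := by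
    intro a b hb
    have h1 := h_ae 0 1 one_pos
    have h2 := h_ae a b hb
    rw [aux_pi_map N f hf_meas hf_nonneg hf_int a b hb] at h2
    have h2 := ae_of_ae_map (Measurable.aemeasurable (by fun_prop)) h2
    filter_upwards [h1, h2] with z hz hz'
    obtain ⟨-, -, -, hanti, -, -, hs⟩ := hz
    obtain ⟨-, -, -, -, -, -, hs'⟩ := hz'
    have hc : b * b * b ^ (-(N : ℤ) - 1) ≠ 0 := by positivity
    have hy : xT (fun i => a + b * z i) = a + b * ((xT (fun i => a + b * z i) - a) / b) := by
      field_simp; ring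
    rw [hy, hBeq a b hb, hAeq a b hb, mul_div_mul_left _ _ hc] at hs'
    have hmem : 1 / T ∈ Ioo (0:ℝ) 1 := ⟨by positivity, by rw [div_lt_one hTpos]; exact hT⟩
    have := hanti.injOn (show _ ∈ {y | B y z / A z ∈ Ioo (0 : ℝ) 1} by
        simp only [mem_ofPred_eq]; rw [hs']; exact hmem)
      (show xT z ∈ {y | B y z / A z ∈ Ioo (0 : ℝ) 1} by
        simp only [mem_ofPred_eq]; rw [hs]; exact hmem) (hs'.trans hs.symm)
    rw [hy, this]
  -- the lintegral version of the good property
  let G : ℝ → ℝ≥0∞ := fun y => ENNReal.ofReal (1 - F y)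
  have hGm : Measurable G := by fun_prop
  have hG1 : ∀ y, G y ≤ 1 := fun y => by
    simp only [G, ENNReal.ofReal_le_one]; linarith [hF0 y]
  let A' : (Fin N → ℝ) → ℝ≥0∞ := fun x => ∫⁻ p, ENNReal.ofReal (auxK N f p x) ∂auxM
  let B' : (Fin N → ℝ) → ℝ≥0∞ := fun x =>
    ∫⁻ p, ENNReal.ofReal (auxK N f p x) * G ((xT x - p.2) / p.1) ∂auxM
  have hKm := auxK_meas N f hf_meas
  have hgm : Measurable (fun q : (Fin N → ℝ) × (ℝ × ℝ) => G ((xT q.1 - q.2.2) / q.2.1)) :=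
    hGm.comp (by fun_prop)
  have hA'm : Measurable A' := hKm.ennreal_ofReal.lintegral_prod_right'
  have hB'm : Measurable B' := (hKm.ennreal_ofReal.mul hgm).lintegral_prod_right'
  let S : Set (Fin N → ℝ) := {x | B' x = ENNReal.ofReal (1 / T) * A' x}
  have hS : MeasurableSet S := measurableSet_eq_fun hB'm (hA'm.const_mul _)
  have hgood : ∀ (a b : ℝ), 0 < b →
      ∀ᵐ x ∂(Measure.pi fun _ : Fin N => locScaleLaw f a b), x ∈ S := by
    intro a b hb
    filter_upwards [h_ae a b hb] with x hx
    obtain ⟨hpos, hint, -, -, -, -, hs⟩ := hx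
    have hint' : Integrable (fun p => auxK N f p x) auxM := by rw [auxM_eq]; exact hint
    have hK0 : ∀ᵐ p ∂auxM, 0 ≤ auxK N f p x := by
      filter_upwards [auxM_pos] with p hp
      exact mul_nonneg (zpow_nonneg hp.le _) (Finset.prod_nonneg fun i _ => hf_nonneg _)
    have hintB : Integrable (fun p => auxK N f p x * (1 - F ((xT x - p.2) / p.1))) auxM := by
      refine hint'.mul_bdd (c := 1) (Measurable.aestronglyMeasurable (by fun_prop)) ?_
      refine Eventually.of_forall fun p => ?_
      rw [Real.norm_eq_abs, abs_le]
      constructor <;> linarith [hF0 ((xT x - p.2) / p.1), hF1 ((xT x - p.2) / p.1)]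
    have eA : A x = ∫ p, auxK N f p x ∂auxM := by
      rw [hA, auxM, integral_prod _ hint']; rfl
    have eB : B (xT x) x = ∫ p, auxK N f p x * (1 - F ((xT x - p.2) / p.1)) ∂auxM := by
      rw [hB, auxM, integral_prod _ hintB]; rfl
    have eA' : A' x = ENNReal.ofReal (A x) := by
      rw [eA, ofReal_integral_eq_lintegral_ofReal hint' hK0]
    have eB' : B' x = ENNReal.ofReal (B (xT x) x) := by
      rw [eB, ofReal_integral_eq_lintegral_ofReal hintB]
      · apply lintegral_congr_ae
        filter_upwards [hK0] with p hp
        rw [ENNReal.ofReal_mul hp]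
      · filter_upwards [hK0] with p hp
        exact mul_nonneg hp (by linarith [hF1 ((xT x - p.2) / p.1)])
    change B' x = _
    rw [eA', eB', ← ENNReal.ofReal_mul (by positivity)]
    congr 1
    rw [← hs]; field_simp
  have hSae : ∀ᵐ x : Fin N → ℝ, x ∈ S := by
    have h0 := aux_key N f hf_meas hf_nonneg hf_int (fun x _ => Sᶜ.indicator 1 x)
      ((measurable_one.indicator hS.compl).comp measurable_fst)
    have hz : ∫⁻ x, ∫⁻ p, ENNReal.ofReal (auxK N f p x) * Sᶜ.indicator 1 x ∂auxM = 0 := by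
      rw [h0, ← lintegral_zero (μ := auxM)]
      apply lintegral_congr_ae
      filter_upwards [auxM_pos] with p hp
      have h1 := hgood p.2 p.1 hp
      rw [aux_pi_map N f hf_meas hf_nonneg hf_int p.2 p.1 hp] at h1
      have h2 := ae_of_ae_map (Measurable.aemeasurable (by fun_prop)) h1
      have h3 : ∫⁻ z, Sᶜ.indicator (1 : (Fin N → ℝ) → ℝ≥0∞) (fun i => p.2 + p.1 * z i) ∂P = 0 := by
        rw [← lintegral_zero (μ := P)]
        apply lintegral_congr_ae
        filter_upwards [h2] with z hz
        exact indicator_of_notMem (notMem_compl_iff.2 hz) _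
      rw [h3, mul_zero]
    have hm : Measurable fun x => ∫⁻ p, ENNReal.ofReal (auxK N f p x) * Sᶜ.indicator 1 x ∂auxM :=
      (hKm.ennreal_ofReal.mul
        ((measurable_one.indicator hS.compl).comp measurable_fst)).lintegral_prod_right'
    rw [lintegral_eq_zero_iff hm] at hz
    filter_upwards [hz] with x hx
    by_contra hxS
    rw [indicator_of_mem (show x ∈ Sᶜ from hxS)] at hx
    simp only [Pi.one_apply, mul_one, Pi.zero_apply] at hx
    have hA0 : A' x = 0 := hx
    have hB0 : B' x ≤ A' x := lintegral_mono fun p => by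
      calc _ ≤ ENNReal.ofReal (auxK N f p x) * 1 := by gcongr; exact hG1 _
        _ = _ := mul_one _
    apply hxS
    change B' x = _
    rw [hA0] at hB0 ⊢
    simpa using hB0
  -- main identity
  let i0 : Fin N := ⟨0, by omega⟩
  let i1 : Fin N := ⟨1, by omega⟩
  have hi : i0 ≠ i1 := by simp [i0, i1]
  let ψ := auxPsi i0 i1
  have hψ : Measurable ψ := auxPsi_meas i0 i1
  have hne : ∀ᵐ z ∂P, z i0 ≠ z i1 := by
    have hac : P ≪ volume := by
      rw [hPdef]
      unfold locScaleLaw at hP ⊢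
      rw [aux_pi_density N (fun x => ENNReal.ofReal (1⁻¹ * f ((x - 0) / 1))) (by fun_prop)]
      exact withDensity_absolutelyContinuous _ _
    exact hac.ae_le (aux_ne i0 i1 hi)
  have hred : ∀ g : (Fin N → ℝ) → ℝ≥0∞, Measurable g →
      ∫⁻ p, ENNReal.ofReal p.1⁻¹ * ∫⁻ z, ψ (fun i => p.2 + p.1 * z i) * g z ∂P ∂auxM
        = ∫⁻ z, g z ∂P := by
    intro g hg
    have hψ2 : Measurable (fun q : (ℝ × ℝ) × (Fin N → ℝ) => ψ (fun i => q.1.2 + q.1.1 * q.2 i)) :=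
      hψ.comp (show Measurable (fun (q : (ℝ × ℝ) × (Fin N → ℝ)) (i : Fin N) => q.1.2 + q.1.1 * q.2 i)
        by fun_prop)
    have h1 : ∀ p : ℝ × ℝ, ENNReal.ofReal p.1⁻¹ * ∫⁻ z, ψ (fun i => p.2 + p.1 * z i) * g z ∂P
        = ∫⁻ z, ENNReal.ofReal p.1⁻¹ * (ψ (fun i => p.2 + p.1 * z i) * g z) ∂P := by
      intro p
      rw [lintegral_const_mul]
      exact (hψ2.comp (measurable_const.prodMk measurable_id)).mul hg
    rw [lintegral_congr h1, lintegral_lintegral_swap]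
    · apply lintegral_congr_ae
      filter_upwards [hne] with z hz
      have h2 := auxPsi_int i0 i1 z hz
      have h3 : Measurable fun p : ℝ × ℝ => ENNReal.ofReal p.1⁻¹ * ψ (fun i => p.2 + p.1 * z i) :=
        Measurable.mul (by fun_prop) (hψ2.comp (measurable_id.prodMk measurable_const))
      simp only [← mul_assoc]
      rw [lintegral_mul_const _ h3, h2, one_mul]
    · apply Measurable.aemeasurable
      exact Measurable.mul (by fun_prop) (hψ2.mul (hg.comp measurable_snd))
  have hmain : ∫⁻ z, G (xT z) ∂P = ENNReal.ofReal (1 / T) := by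
    have e1 := aux_key N f hf_meas hf_nonneg hf_int (fun x p => ψ x * G ((xT x - p.2) / p.1))
      ((hψ.comp measurable_fst).mul hgm)
    have e2 := aux_key N f hf_meas hf_nonneg hf_int (fun x p => ψ x * 1)
      ((hψ.comp measurable_fst).mul measurable_const)
    have r1 := hred (fun z => G (xT z)) (by fun_prop)
    have r2 := hred (fun z => 1) measurable_const
    have c1 : ∫⁻ x, ∫⁻ p, ENNReal.ofReal (auxK N f p x) * (ψ x * G ((xT x - p.2) / p.1)) ∂auxM
        = ∫⁻ x, ψ x * B' x := by
      congr 1; ext x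
      rw [← lintegral_const_mul]
      · congr 1; ext p; ring
      · exact (hKm.ennreal_ofReal.mul hgm).comp (measurable_const.prodMk measurable_id)
    have c2 : ∫⁻ x, ∫⁻ p, ENNReal.ofReal (auxK N f p x) * (ψ x * 1) ∂auxM
        = ∫⁻ x, ψ x * A' x := by
      congr 1; ext x
      rw [← lintegral_const_mul]
      · congr 1; ext p; ring
      · exact hKm.ennreal_ofReal.comp (measurable_const.prodMk measurable_id)
    have c3 : ∫⁻ x, ψ x * B' x = ENNReal.ofReal (1 / T) * ∫⁻ x, ψ x * A' x := by
      rw [← lintegral_const_mul _ (show Measurable fun x => ψ x * A' x from hψ.mul hA'm)]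
      apply lintegral_congr_ae
      filter_upwards [hSae] with x hx
      have hx : B' x = _ := hx
      rw [hx]; ring
    have c4 : ∫⁻ p, ENNReal.ofReal p.1⁻¹ * ∫⁻ z, ψ (fun i => p.2 + p.1 * z i) *
          G ((xT (fun i => p.2 + p.1 * z i) - p.2) / p.1) ∂P ∂auxM
        = ∫⁻ p, ENNReal.ofReal p.1⁻¹ * ∫⁻ z, ψ (fun i => p.2 + p.1 * z i) * G (xT z) ∂P ∂auxM := by
      apply lintegral_congr_ae
      filter_upwards [auxM_pos] with p hp
      congr 1
      apply lintegral_congr_ae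
      filter_upwards [hxTeq p.2 p.1 hp] with z hz
      rw [hz, add_sub_cancel_left, mul_div_cancel_left₀ _ hp.ne']
    rw [← r1, ← c4, ← e1, c1, c3, ← c2, e2, r2]
    simp [P]
  intro μs σs hσ
  have hL := aux_prob2 f hf_meas hf_nonneg hf_int μs σs hσ
  have hmp := measurePreserving_piFinSuccAbove (fun _ : Fin (N+1) => locScaleLaw f μs σs) (Fin.last N)
  have hset : {z : Fin (N+1) → ℝ | xT (fun i : Fin N => z i.castSucc) < z (Fin.last N)} =
      (MeasurableEquiv.piFinSuccAbove (fun _ : Fin (N+1) => ℝ) (Fin.last N)) ⁻¹'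
        {q : ℝ × (Fin N → ℝ) | xT q.2 < q.1} := by
    ext z
    simp [MeasurableEquiv.piFinSuccAbove, Fin.insertNthEquiv]
    rfl
  have hms : MeasurableSet {q : ℝ × (Fin N → ℝ) | xT q.2 < q.1} :=
    measurableSet_lt (by fun_prop) (by fun_prop)
  rw [hset, hmp.measure_preimage hms.nullMeasurableSet, Measure.prod_apply_symm hms]
  have hsl : ∀ x : Fin N → ℝ, (fun t : ℝ => (t, x)) ⁻¹' {q : ℝ × (Fin N → ℝ) | xT q.2 < q.1}
      = Ioi (xT x) := fun x => rfl
  simp only [hsl]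
  have hlaw : ∀ y, locScaleLaw f μs σs (Ioi y) = G ((y - μs) / σs) := by
    intro y
    rw [aux_law_lint f hf_meas μs σs hσ, Measure.map_apply (by fun_prop) measurableSet_Ioi]
    rw [show (fun t => μs + σs * t) ⁻¹' Ioi y = Ioi ((y - μs) / σs) by
      ext t; simp only [mem_preimage, mem_Ioi, div_lt_iff₀ hσ]
      constructor <;> intro h <;> linarith]
    exact hGlaw _
  simp only [hlaw]
  rw [aux_pi_map N f hf_meas hf_nonneg hf_int μs σs hσ, lintegral_map (by fun_prop) (by fun_prop),
    ← hmain]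
  apply lintegral_congr_ae
  filter_upwards [hxTeq μs σs hσ] with z hz
  rw [hz, add_sub_cancel_left, mul_div_cancel_left₀ _ hσ.ne']
end

section
/- Let x₁ < x₂ < x₃ be three distinct real numbers. Then the marginal likelihood integral for a sample of size N = 3 from the Generalised Pareto family under the improper prior Π₀(μ, σ, ξ) = (1/σ)·(1 + ξ²)^{−1/2} is finite and strictly positive: 0 < ∫_ℝ (1 + ξ²)^{−1/2} ∫₀^∞ σ^{−1} ∫_ℝ ∏_{i=1}^{3} f_{μ,σ,ξ}(x_i) dμ dσ dξ < ∞. In other words, the posterior distribution on (μ, σ, ξ) obtained from this prior and three GPD observations is proper. -/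
open MeasureTheory Set

/-- The Generalised Pareto density with location `μ`, scale `σ` and tail parameter `ξ`:
`(1/σ)·(1 + ξ(x-μ)/σ)^(-1/ξ - 1)` for `x ≥ μ` with `1 + ξ(x-μ)/σ > 0` (and `0` otherwise);
for `ξ = 0` it is `(1/σ)·exp(-(x-μ)/σ)` for `x ≥ μ` (and `0` otherwise). -/
noncomputable def gpdDensity (μ σ ξ x : ℝ) : ℝ :=
  if ξ = 0 then
    (if μ ≤ x then (1 / σ) * Real.exp (-(x - μ) / σ) else 0)
  else
    (if μ ≤ x ∧ 0 < 1 + ξ * (x - μ) / σ then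
      (1 / σ) * Real.rpow (1 + ξ * (x - μ) / σ) (-1 / ξ - 1)
    else 0)

lemma gpd_L (c p : ℝ) (hc : 0 < c) (hp : 0 < p) :
    ∫⁻ u in Ioi c, ENNReal.ofReal ((1 - c / u) ^ (p - 1) * (u ^ 3)⁻¹)
      = ENNReal.ofReal (1 / (c ^ 2 * p * (p + 1))) := by
  set g : ℝ → ℝ := fun u => (1 / c ^ 2) * ((1 - c / u) ^ p / p - (1 - c / u) ^ (p + 1) / (p + 1)) with hg
  have hcont : ContinuousWithinAt g (Ici c) c := by
    apply ContinuousAt.continuousWithinAt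
    have h1 : ContinuousAt (fun u : ℝ => 1 - c / u) c :=
      continuousAt_const.sub (continuousAt_const.div continuousAt_id hc.ne')
    have h2 : ContinuousAt (fun u : ℝ => (1 - c / u) ^ p) c :=
      h1.rpow_const (Or.inr hp.le)
    have h3 : ContinuousAt (fun u : ℝ => (1 - c / u) ^ (p + 1)) c :=
      h1.rpow_const (Or.inr (by linarith))
    exact continuousAt_const.mul ((h2.div_const p).sub (h3.div_const (p + 1)))
  have hpos : ∀ x ∈ Ioi c, 0 < 1 - c / x := by
    intro x hx
    have hx' : c < x := hx
    have : c / x < 1 := by rw [div_lt_one (by linarith)]; exact hx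
    linarith
  have hderiv : ∀ x ∈ Ioi c, HasDerivAt g ((1 - c / x) ^ (p - 1) * (x ^ 3)⁻¹) x := by
    intro x hx
    have hx' : c < x := hx
    have hx0 : 0 < x := by linarith
    have hv := hpos x hx
    have h1 : HasDerivAt (fun u : ℝ => 1 - c / u) (c / x ^ 2) x := by
      have := ((hasDerivAt_inv hx0.ne').const_mul c).const_sub 1
      exact this.congr_deriv (by field_simp)
    have h2 := (h1.rpow_const (p := p) (Or.inl hv.ne'))
    have h3 := (h1.rpow_const (p := p + 1) (Or.inl hv.ne'))
    have h4 := ((h2.div_const p).sub (h3.div_const (p + 1))).const_mul (1 / c ^ 2)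
    refine HasDerivAt.congr_deriv h4 ?_
    have e : (1 - c / x) ^ (p + 1 - 1) = (1 - c / x) ^ (p - 1) * (1 - c / x) := by
      rw [← Real.rpow_add_one hv.ne']; congr 1; ring
    rw [e]
    field_simp
    ring
  have hnn : ∀ x ∈ Ioi c, 0 ≤ (1 - c / x) ^ (p - 1) * (x ^ 3)⁻¹ := by
    intro x hx
    have hx' : c < x := hx
    have hx0 : 0 < x := by linarith
    have hv := hpos x hx
    positivity
  have hlim : Filter.Tendsto g Filter.atTop (nhds ((1 / c ^ 2) * (1 / p - 1 / (p + 1)))) := by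
    have h1 : Filter.Tendsto (fun u : ℝ => 1 - c / u) Filter.atTop (nhds 1) := by
      have := (tendsto_const_nhds (x := (1 : ℝ))).sub
        ((Filter.tendsto_id (α := ℝ) (x := Filter.atTop)).const_div_atTop c)
      simpa using this
    have h2 := h1.rpow_const (p := p) (Or.inr hp.le)
    have h3 := h1.rpow_const (p := p + 1) (Or.inr (by linarith))
    rw [Real.one_rpow] at h2 h3
    exact ((h2.div_const p).sub (h3.div_const (p + 1))).const_mul (1 / c ^ 2)
  have hint := integrableOn_Ioi_deriv_of_nonneg hcont hderiv hnn hlim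
  have hval := integral_Ioi_of_hasDerivAt_of_nonneg hcont hderiv hnn hlim
  rw [← ofReal_integral_eq_lintegral_ofReal hint, hval]
  · congr 1
    simp only [hg]
    rw [div_self hc.ne', sub_self, Real.zero_rpow hp.ne', Real.zero_rpow (by linarith)]
    field_simp
    ring
  · exact (ae_restrict_iff' measurableSet_Ioi).2 (Filter.Eventually.of_forall hnn)

lemma gpd_sig_pos (q s : ℝ) (hq : 0 < q) (hs : 0 < s) :
    ∫⁻ σ in Ioc 0 s, ENNReal.ofReal (σ ^ (q - 1)) = ENNReal.ofReal (s ^ q / q) := by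
  have hi : IntegrableOn (fun x : ℝ => x ^ (q - 1)) (Ioc 0 s) volume :=
    (intervalIntegrable_iff_integrableOn_Ioc_of_le hs.le).1
      (intervalIntegral.intervalIntegrable_rpow' (by linarith))
  rw [← ofReal_integral_eq_lintegral_ofReal hi]
  · rw [← intervalIntegral.integral_of_le hs.le, integral_rpow (Or.inl (by linarith))]
    congr 1
    rw [sub_add_cancel, Real.zero_rpow hq.ne', sub_zero]
  · exact (ae_restrict_iff' measurableSet_Ioc).2
      (Filter.Eventually.of_forall fun x hx => Real.rpow_nonneg hx.1.le _)

lemma gpd_sig_neg (q s : ℝ) (hq : 0 < q) (hs : 0 < s) :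
    ∫⁻ σ in Ici s, ENNReal.ofReal (σ ^ (-q - 1)) = ENNReal.ofReal (s ^ (-q) / q) := by
  have hi : IntegrableOn (fun x : ℝ => x ^ (-q - 1)) (Ioi s) volume :=
    integrableOn_Ioi_rpow_of_lt (by linarith) hs
  rw [setLIntegral_congr Ioi_ae_eq_Ici.symm, ← ofReal_integral_eq_lintegral_ofReal hi]
  · rw [integral_Ioi_rpow_of_lt (by linarith) hs]
    congr 1
    rw [sub_add_cancel]
    field_simp
  · exact (ae_restrict_iff' measurableSet_Ioi).2
      (Filter.Eventually.of_forall fun x hx => Real.rpow_nonneg (hs.trans hx).le _)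

lemma gpd_core (F : ℝ → ℝ → ℝ) (G : ℝ → ℝ → ENNReal)
    (hG : Measurable (Function.uncurry G))
    (h : ∀ σ : ℝ, 0 < σ → ENNReal.ofReal (1 / σ) * ∫⁻ μ, ENNReal.ofReal (F σ μ) ≤ ∫⁻ u, G σ u)
    (c p K : ℝ) (hc : 0 < c) (hp : 0 < p) (hK : 0 ≤ K)
    (h0 : ∀ u ≤ c, ∀ σ, G σ u = 0)
    (h1 : ∀ u, c < u → ∫⁻ σ in Ioi 0, G σ u
      ≤ ENNReal.ofReal (K * ((1 - c / u) ^ (p - 1) * (u ^ 3)⁻¹))) :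
    ∫⁻ σ in Ioi (0 : ℝ), ENNReal.ofReal (1 / σ) * ∫⁻ μ, ENNReal.ofReal (F σ μ)
      ≤ ENNReal.ofReal (K / (c ^ 2 * p * (p + 1))) := by
  calc _ ≤ ∫⁻ σ in Ioi (0 : ℝ), ∫⁻ u, G σ u := setLIntegral_mono' measurableSet_Ioi h
    _ = ∫⁻ u, ∫⁻ σ in Ioi (0 : ℝ), G σ u := lintegral_lintegral_swap hG.aemeasurable
    _ ≤ ∫⁻ u, (Ioi c).indicator (fun u => ENNReal.ofReal K *
          ENNReal.ofReal ((1 - c / u) ^ (p - 1) * (u ^ 3)⁻¹)) u := by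
        apply lintegral_mono
        intro u
        by_cases hu : c < u
        · rw [indicator_of_mem (show u ∈ Ioi c from hu), ← ENNReal.ofReal_mul hK]
          exact h1 u hu
        · simp [h0 u (not_lt.1 hu)]
    _ = ENNReal.ofReal K * ENNReal.ofReal (1 / (c ^ 2 * p * (p + 1))) := by
        rw [lintegral_indicator measurableSet_Ioi, lintegral_const_mul' _ _ ENNReal.ofReal_ne_top,
          gpd_L c p hc hp]
    _ = _ := by
        rw [← ENNReal.ofReal_mul hK]; congr 1; ring

lemma gpd_nonneg (μ σ ξ x : ℝ) (hσ : 0 < σ) : 0 ≤ gpdDensity μ σ ξ x := by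
  unfold gpdDensity
  split_ifs with h1 h2 h3
  · positivity
  · exact le_rfl
  · exact mul_nonneg (by positivity) (Real.rpow_nonneg h3.2.le _)
  · exact le_rfl

/-- support -/
lemma gpd_zero_left (μ σ ξ x : ℝ) (h : x < μ) : gpdDensity μ σ ξ x = 0 := by
  unfold gpdDensity
  split_ifs with h1 h2 h3
  · linarith
  · rfl
  · linarith [h3.1]
  · rfl

lemma gpd_val_pos (μ σ k x : ℝ) (hσ : 0 < σ) (hk : 0 < k) (h : μ ≤ x) :
    gpdDensity μ σ (1 / k) x = k * (k * σ) ^ k * (x - μ + k * σ) ^ (-k - 1) := by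
  have hb : 1 + 1 / k * (x - μ) / σ = (x - μ + k * σ) / (k * σ) := by field_simp; ring
  have hw : 0 < x - μ + k * σ := by have := mul_pos hk hσ; linarith
  have hks := mul_pos hk hσ
  unfold gpdDensity
  rw [if_neg (by positivity), hb, if_pos ⟨h, by positivity⟩]
  have he : -1 / (1 / k) - 1 = -k - 1 := by field_simp
  rw [he]
  show 1 / σ * ((x - μ + k * σ) / (k * σ)) ^ (-k - 1) = _
  rw [Real.div_rpow hw.le hks.le]
  have : (k * σ) ^ (-k - 1) = ((k * σ) ^ k)⁻¹ * (k * σ)⁻¹ := by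
    rw [sub_eq_add_neg, Real.rpow_add hks, Real.rpow_neg hks.le, Real.rpow_neg_one]
  rw [this]
  have := Real.rpow_pos_of_pos hks k
  field_simp

lemma gpd_val_neg (μ σ k x : ℝ) (hσ : 0 < σ) (hk : 0 < k) (h : μ ≤ x) (hx : x < μ + k * σ) :
    gpdDensity μ σ (-(1 / k)) x = k * (k * σ) ^ (-k) * (μ + k * σ - x) ^ (k - 1) := by
  have hb : 1 + -(1 / k) * (x - μ) / σ = (μ + k * σ - x) / (k * σ) := by field_simp; ring
  have hw : 0 < μ + k * σ - x := by linarith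
  have hks := mul_pos hk hσ
  unfold gpdDensity
  rw [if_neg (by simp [hk.ne']), hb, if_pos ⟨h, by positivity⟩]
  have he : -1 / (-(1 / k)) - 1 = k - 1 := by field_simp
  rw [he]
  show 1 / σ * ((μ + k * σ - x) / (k * σ)) ^ (k - 1) = _
  rw [Real.div_rpow hw.le hks.le]
  have : (k * σ) ^ (k - 1) = (k * σ) ^ k * (k * σ)⁻¹ := by
    rw [sub_eq_add_neg, Real.rpow_add hks, Real.rpow_neg_one]
  rw [this, Real.rpow_neg hks.le]
  have := Real.rpow_pos_of_pos hks k
  field_simp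

lemma gpd_zero_neg (μ σ k x : ℝ) (hσ : 0 < σ) (hk : 0 < k) (hx : μ + k * σ ≤ x) :
    gpdDensity μ σ (-(1 / k)) x = 0 := by
  have hb : 1 + -(1 / k) * (x - μ) / σ = (μ + k * σ - x) / (k * σ) := by field_simp; ring
  have hks := mul_pos hk hσ
  unfold gpdDensity
  rw [if_neg (by simp [hk.ne']), hb, if_neg]
  rintro ⟨_, h2⟩
  have : (μ + k * σ - x) / (k * σ) ≤ 0 := div_nonpos_of_nonpos_of_nonneg (by linarith) hks.le
  linarith

lemma gpd_F_pos (x₁ x₂ x₃ : ℝ) (h12 : x₁ < x₂) (h23 : x₂ < x₃) (k : ℝ) (hk : 0 < k) :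
    ∫⁻ σ in Ioi (0 : ℝ), ENNReal.ofReal (1 / σ) *
      ∫⁻ μ : ℝ, ENNReal.ofReal (gpdDensity μ σ (1 / k) x₁ * gpdDensity μ σ (1 / k) x₂
        * gpdDensity μ σ (1 / k) x₃)
      ≤ ENNReal.ofReal ((k ^ 2 / 3) / ((x₂ - x₁) ^ 2 * (2 * k) * (2 * k + 1))) := by
  set a := x₂ - x₁ with ha
  have ha0 : 0 < a := by linarith
  set B : ℝ → ℝ := fun u => k ^ 3 * k ^ (3 * k) * ((u - a) ^ (-k - 1) * (u ^ (-k - 1)) ^ 2) with hB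
  set S : Set (ℝ × ℝ) := {q | a < q.2 ∧ k * q.1 ≤ q.2 - a} with hS
  have hSm : MeasurableSet S := by
    apply MeasurableSet.inter
    · exact measurableSet_lt measurable_const measurable_snd
    · exact measurableSet_le (measurable_fst.const_mul k) (measurable_snd.sub_const a)
  set G : ℝ → ℝ → ENNReal := fun σ u =>
    S.indicator (fun q => ENNReal.ofReal (B q.2) * ENNReal.ofReal (q.1 ^ (3 * k - 1))) (σ, u) with hGdef
  apply gpd_core _ G _ _ a (2 * k) (k ^ 2 / 3) ha0 (by positivity) (by positivity)
  · intro u hu σ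
    apply indicator_of_notMem
    intro h
    exact absurd h.1 (not_lt.2 hu)
  · intro u hu
    have hu' : 0 < u - a := by linarith
    have hu0 : 0 < u := by linarith
    calc ∫⁻ σ in Ioi 0, G σ u ≤ ∫⁻ σ in Ioi 0, (Ioc 0 ((u - a) / k)).indicator
            (fun σ => ENNReal.ofReal (B u) * ENNReal.ofReal (σ ^ (3 * k - 1))) σ := by
          apply setLIntegral_mono' measurableSet_Ioi
          intro σ hσ
          simp only [hGdef]
          by_cases hm : (σ, u) ∈ S
          · have : σ ∈ Ioc 0 ((u - a) / k) := ⟨hσ, by rw [le_div_iff₀ hk, mul_comm]; exact hm.2⟩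
            rw [indicator_of_mem hm, indicator_of_mem this]
          · rw [indicator_of_notMem hm]; exact zero_le
      _ ≤ ∫⁻ σ, (Ioc 0 ((u - a) / k)).indicator
            (fun σ => ENNReal.ofReal (B u) * ENNReal.ofReal (σ ^ (3 * k - 1))) σ :=
          setLIntegral_le_lintegral _ _
      _ = ENNReal.ofReal (B u) * ENNReal.ofReal (((u - a) / k) ^ (3 * k) / (3 * k)) := by
          rw [lintegral_indicator measurableSet_Ioc, lintegral_const_mul' _ _ ENNReal.ofReal_ne_top,
            gpd_sig_pos _ _ (by positivity) (by positivity)]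
      _ = ENNReal.ofReal (B u * (((u - a) / k) ^ (3 * k) / (3 * k))) := by
          rw [← ENNReal.ofReal_mul]; simp only [hB]; positivity
      _ = _ := by
          congr 1
          simp only [hB]
          have e1 : 1 - a / u = (u - a) / u := by field_simp
          rw [e1, Real.div_rpow hu'.le hu0.le, Real.div_rpow hu'.le hk.le]
          have e2 : (u - a) ^ (-k - 1) = ((u - a) ^ k)⁻¹ * (u - a)⁻¹ := by
            rw [sub_eq_add_neg (-k), Real.rpow_add hu', Real.rpow_neg hu'.le, Real.rpow_neg_one]
          have e3 : u ^ (-k - 1) = (u ^ k)⁻¹ * u⁻¹ := by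
            rw [sub_eq_add_neg (-k), Real.rpow_add hu0, Real.rpow_neg hu0.le, Real.rpow_neg_one]
          have e4 : ∀ z : ℝ, 0 < z → z ^ (2 * k - 1) = (z ^ k) ^ 2 * z⁻¹ := by
            intro z hz
            rw [sub_eq_add_neg, Real.rpow_add hz, Real.rpow_neg_one, mul_comm 2 k,
              Real.rpow_mul hz.le, Real.rpow_two]
          have e5 : ∀ z : ℝ, 0 < z → z ^ (3 * k) = (z ^ k) ^ 3 := by
            intro z hz
            rw [mul_comm 3 k, Real.rpow_mul hz.le]
            exact_mod_cast Real.rpow_natCast (z ^ k) 3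
          rw [e2, e3, e4 _ hu', e4 _ hu0, e5 _ hu', e5 _ hk]
          have p1 := Real.rpow_pos_of_pos hu' k
          have p2 := Real.rpow_pos_of_pos hu0 k
          have p3 := Real.rpow_pos_of_pos hk k
          field_simp
  · have : Measurable (S.indicator (fun q : ℝ × ℝ =>
        ENNReal.ofReal (B q.2) * ENNReal.ofReal (q.1 ^ (3 * k - 1)))) := by
      apply Measurable.indicator _ hSm
      simp only [hB]
      fun_prop
    exact this
  · intro σ hσ
    rw [← lintegral_const_mul' _ _ ENNReal.ofReal_ne_top,
      ← lintegral_sub_left_eq_self (fun u => G σ u) (x₂ + k * σ)]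
    apply lintegral_mono
    intro μ
    have hks := mul_pos hk hσ
    simp only
    by_cases hμ : μ ≤ x₁
    · have hm : (σ, x₂ + k * σ - μ) ∈ S := by
        constructor
        · show a < x₂ + k * σ - μ
          linarith
        · show k * σ ≤ x₂ + k * σ - μ - a
          linarith
      simp only [hGdef]
      rw [indicator_of_mem hm, ← ENNReal.ofReal_mul (by positivity)]
      set u := x₂ + k * σ - μ with hu
      have hu' : 0 < u - a := by linarith
      have hu0 : 0 < u := by linarith
      rw [← ENNReal.ofReal_mul (by simp only [hB]; positivity)]
      apply ENNReal.ofReal_le_ofReal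
      rw [gpd_val_pos _ _ _ _ hσ hk hμ, gpd_val_pos _ _ _ _ hσ hk (by linarith),
        gpd_val_pos _ _ _ _ hσ hk (by linarith)]
      have w1 : x₁ - μ + k * σ = u - a := by rw [hu, ha]; ring
      have w2 : x₂ - μ + k * σ = u := by rw [hu]; ring
      have w3 : (x₃ - μ + k * σ) ^ (-k - 1) ≤ u ^ (-k - 1) :=
        Real.rpow_le_rpow_of_nonpos hu0 (by linarith) (by linarith)
      rw [w1, w2]
      have e5 : ∀ z : ℝ, 0 < z → z ^ (3 * k) = (z ^ k) ^ 3 := by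
        intro z hz
        rw [mul_comm 3 k, Real.rpow_mul hz.le]
        exact_mod_cast Real.rpow_natCast (z ^ k) 3
      have e6 : σ ^ (3 * k - 1) = (σ ^ k) ^ 3 * σ⁻¹ := by
        rw [sub_eq_add_neg, Real.rpow_add hσ, Real.rpow_neg_one, e5 _ hσ]
      calc _ ≤ 1 / σ * (k * (k * σ) ^ k * (u - a) ^ (-k - 1) * (k * (k * σ) ^ k * u ^ (-k - 1)) *
              (k * (k * σ) ^ k * u ^ (-k - 1))) := by
            gcongr
        _ = _ := by
            simp only [hB]
            rw [e6, e5 _ hk, Real.mul_rpow hk.le hσ.le]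
            ring
    · rw [gpd_zero_left _ _ _ _ (not_le.1 hμ)]
      simp

lemma gpd_F_neg (x₁ x₂ x₃ : ℝ) (h12 : x₁ < x₂) (h23 : x₂ < x₃) (k : ℝ) (hk : 0 < k) :
    ∫⁻ σ in Ioi (0 : ℝ), ENNReal.ofReal (1 / σ) *
      ∫⁻ μ : ℝ, ENNReal.ofReal (gpdDensity μ σ (-(1 / k)) x₁ * gpdDensity μ σ (-(1 / k)) x₂
        * gpdDensity μ σ (-(1 / k)) x₃)
      ≤ ENNReal.ofReal ((k ^ 2 / 3 * ((x₃ - x₁) / (x₃ - x₂))) /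
          ((x₃ - x₁) ^ 2 * k * (k + 1))) := by
  set b := x₃ - x₁ with hb
  have hb0 : 0 < b := by linarith
  have hd : 0 < x₃ - x₂ := by linarith
  set M := b / (x₃ - x₂) with hM
  have hM0 : 0 < M := by positivity
  set B : ℝ → ℝ := fun u => M * (k ^ 3 * k ^ (-(3 * k))) * ((u - b) ^ (k - 1) * (u ^ (k - 1)) ^ 2) with hB
  set S : Set (ℝ × ℝ) := {q | b < q.2 ∧ q.2 ≤ k * q.1} with hS
  have hSm : MeasurableSet S := by
    apply MeasurableSet.inter
    · exact measurableSet_lt measurable_const measurable_snd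
    · exact measurableSet_le measurable_snd (measurable_fst.const_mul k)
  have e4 : ∀ z : ℝ, 0 < z → z ^ (k - 1) = z ^ k * z⁻¹ := by
    intro z hz
    rw [sub_eq_add_neg, Real.rpow_add hz, Real.rpow_neg_one]
  have e5 : ∀ z : ℝ, 0 < z → z ^ (-(3 * k)) = ((z ^ k) ^ 3)⁻¹ := by
    intro z hz
    rw [Real.rpow_neg hz.le, mul_comm 3 k, Real.rpow_mul hz.le]
    congr 1
    exact_mod_cast Real.rpow_natCast (z ^ k) 3
  set G : ℝ → ℝ → ENNReal := fun σ u =>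
    S.indicator (fun q => ENNReal.ofReal (B q.2) * ENNReal.ofReal (q.1 ^ (-(3 * k) - 1))) (σ, u) with hGdef
  apply gpd_core _ G _ _ b k (k ^ 2 / 3 * M) hb0 hk (by positivity)
  · intro u hu σ
    apply indicator_of_notMem
    intro h
    exact absurd h.1 (not_lt.2 hu)
  · intro u hu
    have hu' : 0 < u - b := by linarith
    have hu0 : 0 < u := by linarith
    calc ∫⁻ σ in Ioi 0, G σ u ≤ ∫⁻ σ in Ioi 0, (Ici (u / k)).indicator
            (fun σ => ENNReal.ofReal (B u) * ENNReal.ofReal (σ ^ (-(3 * k) - 1))) σ := by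
          apply setLIntegral_mono' measurableSet_Ioi
          intro σ hσ
          simp only [hGdef]
          by_cases hm : (σ, u) ∈ S
          · have : σ ∈ Ici (u / k) := by
              rw [mem_Ici, div_le_iff₀ hk, mul_comm]; exact hm.2
            rw [indicator_of_mem hm, indicator_of_mem this]
          · rw [indicator_of_notMem hm]; exact zero_le
      _ ≤ ∫⁻ σ, (Ici (u / k)).indicator
            (fun σ => ENNReal.ofReal (B u) * ENNReal.ofReal (σ ^ (-(3 * k) - 1))) σ :=
          setLIntegral_le_lintegral _ _
      _ = ENNReal.ofReal (B u) * ENNReal.ofReal ((u / k) ^ (-(3 * k)) / (3 * k)) := by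
          rw [lintegral_indicator measurableSet_Ici, lintegral_const_mul' _ _ ENNReal.ofReal_ne_top,
            gpd_sig_neg _ _ (by positivity) (by positivity)]
      _ = ENNReal.ofReal (B u * ((u / k) ^ (-(3 * k)) / (3 * k))) := by
          rw [← ENNReal.ofReal_mul]; simp only [hB]; positivity
      _ = _ := by
          congr 1
          simp only [hB]
          have e1 : 1 - b / u = (u - b) / u := by field_simp
          rw [e1, Real.div_rpow hu'.le hu0.le, Real.div_rpow hu0.le hk.le]
          rw [e4 _ hu', e4 _ hu0, e5 _ hu0, e5 _ hk]
          have p1 := Real.rpow_pos_of_pos hu' k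
          have p2 := Real.rpow_pos_of_pos hu0 k
          have p3 := Real.rpow_pos_of_pos hk k
          field_simp
  · have : Measurable (S.indicator (fun q : ℝ × ℝ =>
        ENNReal.ofReal (B q.2) * ENNReal.ofReal (q.1 ^ (-(3 * k) - 1)))) := by
      apply Measurable.indicator _ hSm
      simp only [hB]
      fun_prop
    exact this
  · intro σ hσ
    rw [← lintegral_const_mul' _ _ ENNReal.ofReal_ne_top,
      ← lintegral_add_right_eq_self (fun u => G σ u) (k * σ - x₁)]
    apply lintegral_mono
    intro μ
    have hks := mul_pos hk hσ
    simp only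
    by_cases hμ : μ ≤ x₁
    · by_cases hx : μ + k * σ ≤ x₃
      · rw [gpd_zero_neg _ _ _ _ hσ hk hx]
        simp
      push Not at hx
      have hm : (σ, μ + (k * σ - x₁)) ∈ S := by
        constructor
        · show b < μ + (k * σ - x₁)
          linarith
        · show μ + (k * σ - x₁) ≤ k * σ
          linarith
      simp only [hGdef]
      rw [indicator_of_mem hm, ← ENNReal.ofReal_mul (by positivity)]
      set u := μ + (k * σ - x₁) with hu
      have hu' : 0 < u - b := by linarith
      have hu0 : 0 < u := by linarith
      rw [← ENNReal.ofReal_mul (by simp only [hB]; positivity)]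
      apply ENNReal.ofReal_le_ofReal
      rw [gpd_val_neg _ _ _ _ hσ hk hμ (by linarith),
        gpd_val_neg _ _ _ _ hσ hk (by linarith) (by linarith),
        gpd_val_neg _ _ _ _ hσ hk (by linarith) (by linarith)]
      have w1 : μ + k * σ - x₁ = u := by rw [hu]; ring
      have w2 : μ + k * σ - x₃ = u - b := by rw [hu, hb]; ring
      have w4 : μ + k * σ - x₂ = u - (x₂ - x₁) := by rw [hu]; ring
      have hua : 0 < u - (x₂ - x₁) := by linarith
      have w3 : (u - (x₂ - x₁)) ^ (k - 1) ≤ M * u ^ (k - 1) := by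
        rw [← div_le_iff₀ (by positivity), ← Real.div_rpow hua.le hu0.le]
        calc ((u - (x₂ - x₁)) / u) ^ (k - 1) ≤ ((u - (x₂ - x₁)) / u) ^ (-1 : ℝ) := by
              apply Real.rpow_le_rpow_of_exponent_ge (by positivity)
              · rw [div_le_one hu0]; linarith
              · linarith
          _ = u / (u - (x₂ - x₁)) := by rw [Real.rpow_neg_one, inv_div]
          _ ≤ M := by
              rw [hM, div_le_div_iff₀ hua hd]
              nlinarith
      rw [w1, w2, w4]
      have e6 : σ ^ (-(3 * k) - 1) = ((σ ^ k) ^ 3)⁻¹ * σ⁻¹ := by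
        rw [sub_eq_add_neg, Real.rpow_add hσ, Real.rpow_neg_one, e5 _ hσ]
      calc _ ≤ 1 / σ * (k * (k * σ) ^ (-k) * u ^ (k - 1) * (k * (k * σ) ^ (-k) * (M * u ^ (k - 1))) *
              (k * (k * σ) ^ (-k) * (u - b) ^ (k - 1))) := by
            gcongr
        _ = _ := by
            simp only [hB]
            rw [e6, e5 _ hk, Real.mul_rpow hk.le hσ.le, Real.rpow_neg hk.le, Real.rpow_neg hσ.le]
            ring
    · rw [gpd_zero_left _ _ _ _ (not_le.1 hμ)]
      simp

theorem gpd_posterior_proper_asinh_prior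
    (x₁ x₂ x₃ : ℝ) (h12 : x₁ < x₂) (h23 : x₂ < x₃) :
    0 < ∫⁻ ξ : ℝ, ENNReal.ofReal (1 / Real.sqrt (1 + ξ ^ 2)) *
          ∫⁻ σ in Ioi (0 : ℝ), ENNReal.ofReal (1 / σ) *
            ∫⁻ μ : ℝ, ENNReal.ofReal
              (gpdDensity μ σ ξ x₁ * gpdDensity μ σ ξ x₂ * gpdDensity μ σ ξ x₃) ∧
    (∫⁻ ξ : ℝ, ENNReal.ofReal (1 / Real.sqrt (1 + ξ ^ 2)) *
          ∫⁻ σ in Ioi (0 : ℝ), ENNReal.ofReal (1 / σ) *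
            ∫⁻ μ : ℝ, ENNReal.ofReal
              (gpdDensity μ σ ξ x₁ * gpdDensity μ σ ξ x₂ * gpdDensity μ σ ξ x₃)) < ⊤ := by
  constructor
  · -- lower bound on a box
    set R := 1 + 2 * (x₃ - x₁ + 1) with hR
    have hR0 : 0 < R := by linarith
    set δ := 1 / 2 * R ^ (-2 : ℝ) with hδ
    have hδ0 : 0 < δ := by positivity
    have hden : ∀ ξ ∈ Icc (1 : ℝ) 2, ∀ σ ∈ Icc (1 : ℝ) 2, ∀ μ ∈ Icc (x₁ - 1) x₁, ∀ x, x₁ ≤ x →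
        x ≤ x₃ → δ ≤ gpdDensity μ σ ξ x := by
      intro ξ hξ σ hσ μ hμ x hx hx'
      have hξ0 : 0 < ξ := by linarith [hξ.1]
      have hσ0 : 0 < σ := by linarith [hσ.1]
      have hxm : 0 ≤ x - μ := by linarith [hμ.2]
      have h0 : 0 ≤ ξ * (x - μ) / σ := by positivity
      have h1 : ξ * (x - μ) / σ ≤ 2 * (x₃ - x₁ + 1) := by
        rw [div_le_iff₀ hσ0]
        have : ξ * (x - μ) ≤ 2 * (x₃ - x₁ + 1) :=
          mul_le_mul hξ.2 (by linarith [hμ.1]) hxm (by norm_num)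
        nlinarith [hσ.1]
      unfold gpdDensity
      rw [if_neg hξ0.ne', if_pos ⟨by linarith, by linarith⟩]
      show δ ≤ 1 / σ * (1 + ξ * (x - μ) / σ) ^ (-1 / ξ - 1)
      rw [hδ]
      apply mul_le_mul
      · exact one_div_le_one_div_of_le hσ0 hσ.2
      · calc R ^ (-2 : ℝ) ≤ (1 + ξ * (x - μ) / σ) ^ (-2 : ℝ) :=
              Real.rpow_le_rpow_of_nonpos (by linarith) (by linarith) (by norm_num)
          _ ≤ _ := by
              apply Real.rpow_le_rpow_of_exponent_le (by linarith)
              have : 1 / ξ ≤ 1 := by rw [div_le_one hξ0]; exact hξ.1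
              rw [neg_div]; linarith
      · positivity
      · positivity
    have key : ∀ ξ ∈ Icc (1 : ℝ) 2, ENNReal.ofReal (1 / Real.sqrt 5) * (ENNReal.ofReal (1 / 2) *
        ENNReal.ofReal (δ * δ * δ)) ≤ ENNReal.ofReal (1 / Real.sqrt (1 + ξ ^ 2)) *
          ∫⁻ σ in Ioi (0 : ℝ), ENNReal.ofReal (1 / σ) *
            ∫⁻ μ : ℝ, ENNReal.ofReal
              (gpdDensity μ σ ξ x₁ * gpdDensity μ σ ξ x₂ * gpdDensity μ σ ξ x₃) := by
      intro ξ hξ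
      apply mul_le_mul'
      · apply ENNReal.ofReal_le_ofReal
        apply one_div_le_one_div_of_le (by positivity)
        apply Real.sqrt_le_sqrt
        nlinarith [hξ.1, hξ.2]
      · calc ENNReal.ofReal (1 / 2) * ENNReal.ofReal (δ * δ * δ)
            = ∫⁻ σ in Icc (1 : ℝ) 2, ENNReal.ofReal (1 / 2) * ENNReal.ofReal (δ * δ * δ) := by
              rw [setLIntegral_const, Real.volume_Icc]; norm_num
          _ ≤ ∫⁻ σ in Icc (1 : ℝ) 2, ENNReal.ofReal (1 / σ) *
            ∫⁻ μ : ℝ, ENNReal.ofReal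
              (gpdDensity μ σ ξ x₁ * gpdDensity μ σ ξ x₂ * gpdDensity μ σ ξ x₃) := by
              apply setLIntegral_mono' measurableSet_Icc
              intro σ hσ
              have hσ0 : 0 < σ := by linarith [hσ.1]
              apply mul_le_mul'
              · exact ENNReal.ofReal_le_ofReal (one_div_le_one_div_of_le hσ0 hσ.2)
              · calc ENNReal.ofReal (δ * δ * δ)
                    = ∫⁻ μ in Icc (x₁ - 1) x₁, ENNReal.ofReal (δ * δ * δ) := by
                      rw [setLIntegral_const, Real.volume_Icc]; norm_num
                  _ ≤ ∫⁻ μ in Icc (x₁ - 1) x₁, ENNReal.ofReal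
                      (gpdDensity μ σ ξ x₁ * gpdDensity μ σ ξ x₂ * gpdDensity μ σ ξ x₃) := by
                      apply setLIntegral_mono' measurableSet_Icc
                      intro μ hμ
                      apply ENNReal.ofReal_le_ofReal
                      have := hden ξ hξ σ hσ μ hμ
                      have i1 := this x₁ le_rfl (by linarith)
                      have i2 := this x₂ (by linarith) (by linarith)
                      have i3 := this x₃ (by linarith) le_rfl
                      have n1 := gpd_nonneg μ σ ξ x₁ hσ0
                      have n2 := gpd_nonneg μ σ ξ x₂ hσ0
                      gcongr
                  _ ≤ _ := setLIntegral_le_lintegral _ _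
          _ ≤ _ := lintegral_mono_set (fun σ hσ => lt_of_lt_of_le one_pos hσ.1)
    calc (0 : ENNReal) < ENNReal.ofReal (1 / Real.sqrt 5) * (ENNReal.ofReal (1 / 2) *
        ENNReal.ofReal (δ * δ * δ)) := by
          rw [← ENNReal.ofReal_mul (by positivity), ← ENNReal.ofReal_mul (by positivity)]
          exact ENNReal.ofReal_pos.2 (by positivity)
      _ = ∫⁻ ξ in Icc (1 : ℝ) 2, ENNReal.ofReal (1 / Real.sqrt 5) * (ENNReal.ofReal (1 / 2) *
        ENNReal.ofReal (δ * δ * δ)) := by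
          rw [setLIntegral_const, Real.volume_Icc]; norm_num
      _ ≤ ∫⁻ ξ in Icc (1 : ℝ) 2, ENNReal.ofReal (1 / Real.sqrt (1 + ξ ^ 2)) *
          ∫⁻ σ in Ioi (0 : ℝ), ENNReal.ofReal (1 / σ) *
            ∫⁻ μ : ℝ, ENNReal.ofReal
              (gpdDensity μ σ ξ x₁ * gpdDensity μ σ ξ x₂ * gpdDensity μ σ ξ x₃) :=
          setLIntegral_mono' measurableSet_Icc key
      _ ≤ _ := setLIntegral_le_lintegral _ _
  · set C := 1 / (x₂ - x₁) ^ 2 + ((x₃ - x₁) / (x₃ - x₂)) / (x₃ - x₁) ^ 2 with hC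
    have d1 : 0 < x₂ - x₁ := by linarith
    have d2 : 0 < x₃ - x₂ := by linarith
    have d3 : 0 < x₃ - x₁ := by linarith
    have hC0 : 0 ≤ C := by positivity
    have hC1 : 1 / (x₂ - x₁) ^ 2 ≤ C := by rw [hC]; linarith [show 0 ≤ ((x₃ - x₁) / (x₃ - x₂)) / (x₃ - x₁) ^ 2 by positivity]
    have hC2 : ((x₃ - x₁) / (x₃ - x₂)) / (x₃ - x₁) ^ 2 ≤ C := by rw [hC]; linarith [show 0 ≤ 1 / (x₂ - x₁) ^ 2 by positivity]
    have hsq : ∀ ξ : ℝ, Real.sqrt (1 + ξ ^ 2) ≤ 1 + |ξ| := by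
      intro ξ
      rw [Real.sqrt_le_left (by positivity)]
      nlinarith [abs_nonneg ξ, sq_abs ξ]
    have hF : ∀ ξ : ℝ, ξ ≠ 0 → ∫⁻ σ in Ioi (0 : ℝ), ENNReal.ofReal (1 / σ) *
            ∫⁻ μ : ℝ, ENNReal.ofReal
              (gpdDensity μ σ ξ x₁ * gpdDensity μ σ ξ x₂ * gpdDensity μ σ ξ x₃)
          ≤ ENNReal.ofReal (C * (1 / (1 + |ξ|))) := by
      intro ξ hξ
      rcases lt_or_gt_of_ne hξ with h | h
      · obtain ⟨k, hk, rfl⟩ : ∃ k : ℝ, 0 < k ∧ ξ = -(1 / k) :=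
          ⟨-(1 / ξ), by rw [neg_pos]; exact one_div_neg.2 h, by field_simp⟩
        refine (gpd_F_neg x₁ x₂ x₃ h12 h23 k hk).trans (ENNReal.ofReal_le_ofReal ?_)
        rw [abs_neg, abs_of_pos (by positivity)]
        calc _ = (((x₃ - x₁) / (x₃ - x₂)) / (x₃ - x₁) ^ 2) * (1 / (1 + 1 / k)) * (1 / 3) := by
              field_simp; try ring
          _ ≤ C * (1 / (1 + 1 / k)) * 1 := by gcongr; norm_num
          _ = _ := by ring
      · obtain ⟨k, hk, rfl⟩ : ∃ k : ℝ, 0 < k ∧ ξ = 1 / k :=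
          ⟨1 / ξ, by positivity, by field_simp⟩
        refine (gpd_F_pos x₁ x₂ x₃ h12 h23 k hk).trans (ENNReal.ofReal_le_ofReal ?_)
        rw [abs_of_pos (by positivity)]
        calc _ = (1 / (x₂ - x₁) ^ 2) * (1 / (2 + 1 / k)) * (1 / 6) := by
              field_simp; try ring
          _ ≤ C * (1 / (1 + 1 / k)) * 1 := by gcongr <;> norm_num
          _ = _ := by ring
    calc _ ≤ ∫⁻ ξ : ℝ, ENNReal.ofReal C * ENNReal.ofReal ((1 + ξ ^ 2)⁻¹) := by
          apply lintegral_mono_ae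
          have : ∀ᵐ ξ : ℝ, ξ ≠ 0 := by simp [ae_iff, measure_singleton]
          filter_upwards [this] with ξ hξ
          refine (mul_le_mul' le_rfl (hF ξ hξ)).trans ?_
          rw [← ENNReal.ofReal_mul (by positivity), ← ENNReal.ofReal_mul hC0]
          apply ENNReal.ofReal_le_ofReal
          have hs : 0 < Real.sqrt (1 + ξ ^ 2) := by positivity
          calc _ ≤ 1 / Real.sqrt (1 + ξ ^ 2) * (C * (1 / Real.sqrt (1 + ξ ^ 2))) := by
                gcongr; exact hsq ξ
            _ = C * (Real.sqrt (1 + ξ ^ 2) ^ 2)⁻¹ := by field_simp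
            _ = _ := by rw [Real.sq_sqrt (by positivity)]
      _ = ENNReal.ofReal C * ∫⁻ ξ : ℝ, ENNReal.ofReal ((1 + ξ ^ 2)⁻¹) :=
          lintegral_const_mul' _ _ ENNReal.ofReal_ne_top
      _ < ⊤ := by
          rw [← ofReal_integral_eq_lintegral_ofReal integrable_inv_one_add_sq
            (Filter.Eventually.of_forall fun x => by positivity)]
          exact ENNReal.mul_lt_top ENNReal.ofReal_lt_top ENNReal.ofReal_lt_top
end

section
/- Let x₁ < x₂ < x₃ be three distinct real numbers. Then the marginal likelihood integral for a sample of size N = 3 from the Generalised Pareto family under the improper prior Π₀(μ, σ, ξ) = 1/σ that is uniform in ξ diverges: ∫_ℝ ∫₀^∞ σ^{−1} ∫_ℝ ∏_{i=1}^{3} f_{μ,σ,ξ}(x_i) dμ dσ dξ = ∞. In other words, an improper prior uniform on the tail parameter ξ (combined with the 1/σ prior on location–scale) leads to an improper posterior in the N = 3 GPD case. -/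
open MeasureTheory Set

lemma gpd_aux_point (k σ s x x3 U : ℝ) (hk : 1 < k) (hσ : 0 < σ)
    (hx : 0 < s + x3 - x) (hU : s + x3 - x ≤ U) (hle : s + x3 - x ≤ σ / k) :
    (1 / σ) * (U * (k / σ)) ^ (1 / k - 1) ≤ gpdDensity (s + (x3 - σ / k)) σ (-k) x := by
  have hk0 : 0 < k := by linarith
  have e1 : 1 + -k * (x - (s + (x3 - σ / k))) / σ = (s + x3 - x) * (k / σ) := by
    field_simp
    ring
  have e2 : -1 / -k - 1 = 1 / k - 1 := by rw [neg_div_neg_eq]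
  have hpos : 0 < (s + x3 - x) * (k / σ) := by positivity
  unfold gpdDensity
  rw [if_neg (by linarith), e1, e2, if_pos ⟨by linarith, hpos⟩]
  apply mul_le_mul_of_nonneg_left _ (by positivity)
  apply Real.rpow_le_rpow_of_nonpos hpos
  · gcongr
  · rw [sub_nonpos, div_le_one hk0]
    exact hk.le

lemma gpd_aux_prod (x₁ x₂ x₃ k σ s T : ℝ) (h12 : x₁ < x₂) (h23 : x₂ < x₃)
    (hT : T = x₃ - x₁ + 1) (hk : 1 < k) (hσ : k * T < σ) (hs : s ∈ Ioc (0:ℝ) 1) :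
    (k⁻¹ ^ 3 * k ^ (3 / k) * T⁻¹ ^ 2 * σ ^ (-(3 / k))) * s ^ (1 / k - 1) ≤
      gpdDensity (s + (x₃ - σ / k)) σ (-k) x₁ * gpdDensity (s + (x₃ - σ / k)) σ (-k) x₂ *
      gpdDensity (s + (x₃ - σ / k)) σ (-k) x₃ := by
  obtain ⟨hs0, hs1⟩ := hs
  have hk0 : 0 < k := by linarith
  have hT1 : 1 < T := by linarith
  have hT0 : 0 < T := by linarith
  have hσ0 : 0 < σ := lt_trans (by positivity) hσ
  have hτ : T < σ / k := by rw [lt_div_iff₀ hk0]; linarith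
  have a1 := gpd_aux_point k σ s x₁ x₃ T hk hσ0 (by linarith) (by linarith) (by linarith)
  have a2 := gpd_aux_point k σ s x₂ x₃ T hk hσ0 (by linarith) (by linarith) (by linarith)
  have a3 := gpd_aux_point k σ s x₃ x₃ s hk hσ0 (by linarith) (by linarith) (by linarith)
  have p1 : 0 ≤ (1 / σ) * (T * (k / σ)) ^ (1 / k - 1) := by positivity
  have p3 : 0 ≤ (1 / σ) * (s * (k / σ)) ^ (1 / k - 1) := by positivity
  refine le_trans ?_ (mul_le_mul (mul_le_mul a1 a2 p1 (p1.trans a1)) a3 p3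
    (mul_nonneg (p1.trans a1) (p1.trans a2)))
  rw [Real.mul_rpow hT0.le (by positivity), Real.mul_rpow hs0.le (by positivity)]
  have hTb : T⁻¹ ≤ T ^ (1 / k - 1) := by
    rw [← Real.rpow_neg_one]
    apply Real.rpow_le_rpow_of_exponent_le hT1.le
    have : 0 < 1 / k := by positivity
    linarith
  have hTb2 : T⁻¹ ^ 2 ≤ (T ^ (1 / k - 1)) ^ 2 := by gcongr
  have e : k⁻¹ ^ 3 * k ^ (3 / k) * σ ^ (-(3 / k)) = (1 / σ) ^ 3 * ((k / σ) ^ (1 / k - 1)) ^ 3 := by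
    have h3 : (3 / k) = (1 / k) * (3 : ℕ) := by push_cast; ring
    rw [Real.rpow_sub_one (by positivity), Real.div_rpow hk0.le hσ0.le, Real.rpow_neg hσ0.le,
      h3, Real.rpow_mul_natCast hk0.le, Real.rpow_mul_natCast hσ0.le]
    field_simp
  calc _ = T⁻¹ ^ 2 * ((k⁻¹ ^ 3 * k ^ (3 / k) * σ ^ (-(3 / k))) * s ^ (1 / k - 1)) := by ring
    _ ≤ (T ^ (1 / k - 1)) ^ 2 * ((k⁻¹ ^ 3 * k ^ (3 / k) * σ ^ (-(3 / k))) * s ^ (1 / k - 1)) := by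
        gcongr
    _ = _ := by rw [e]; ring

lemma gpd_aux_int_s (k : ℝ) (hk : 1 < k) :
    ∫⁻ s in Ioc (0:ℝ) 1, ENNReal.ofReal (s ^ (1 / k - 1)) = ENNReal.ofReal k := by
  have hk0 : 0 < k := by linarith
  have hp : 0 < 1 / k := by positivity
  have hi := intervalIntegral.intervalIntegrable_rpow' (a := 0) (b := 1) (r := 1 / k - 1)
    (by linarith)
  rw [intervalIntegrable_iff_integrableOn_Ioc_of_le zero_le_one] at hi
  rw [← ofReal_integral_eq_lintegral_ofReal hi, ← intervalIntegral.integral_of_le zero_le_one,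
    integral_rpow (Or.inl (by linarith))]
  · congr 1
    rw [sub_add_cancel, Real.one_rpow, Real.zero_rpow hp.ne']
    field_simp
    ring
  · filter_upwards [ae_restrict_mem measurableSet_Ioc] with s hs
    exact Real.rpow_nonneg hs.1.le _

lemma gpd_aux_int_σ (k a : ℝ) (hk : 0 < k) (ha : 0 < a) :
    ∫⁻ s in Ioi a, ENNReal.ofReal (s ^ (-1 - 3 / k)) = ENNReal.ofReal (a ^ (-(3 / k)) * (k / 3)) := by
  have hp : 0 < 3 / k := by positivity
  have hi := integrableOn_Ioi_rpow_of_lt (a := -1 - 3 / k) (by linarith) ha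
  rw [← ofReal_integral_eq_lintegral_ofReal hi, integral_Ioi_rpow_of_lt (by linarith) ha]
  · congr 1
    rw [show -1 - 3 / k + 1 = -(3 / k) by ring]
    field_simp
  · filter_upwards [ae_restrict_mem measurableSet_Ioi] with s hs
    exact Real.rpow_nonneg (ha.le.trans (le_of_lt hs)) _

lemma gpd_aux_inner (x₁ x₂ x₃ k σ T : ℝ) (h12 : x₁ < x₂) (h23 : x₂ < x₃)
    (hT : T = x₃ - x₁ + 1) (hk : 1 < k) (hσ : k * T < σ) :
    ENNReal.ofReal ((k⁻¹ ^ 3 * k ^ (3 / k) * T⁻¹ ^ 2 * σ ^ (-(3 / k))) * k) ≤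
    ∫⁻ μ : ℝ, ENNReal.ofReal
          (gpdDensity μ σ (-k) x₁ * gpdDensity μ σ (-k) x₂ * gpdDensity μ σ (-k) x₃) := by
  have hk0 : 0 < k := by linarith
  have hT0 : 0 < T := by linarith
  have hσ0 : 0 < σ := lt_trans (by positivity) hσ
  have hc : 0 ≤ k⁻¹ ^ 3 * k ^ (3 / k) * T⁻¹ ^ 2 * σ ^ (-(3 / k)) := by positivity
  rw [← lintegral_add_right_eq_self _ (x₃ - σ / k)]
  refine le_trans ?_ (setLIntegral_le_lintegral (Ioc (0:ℝ) 1) _)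
  rw [ENNReal.ofReal_mul hc, ← gpd_aux_int_s k hk, ← lintegral_const_mul' _ _ ENNReal.ofReal_ne_top]
  apply setLIntegral_mono' measurableSet_Ioc
  intro s hs
  rw [← ENNReal.ofReal_mul hc]
  exact ENNReal.ofReal_le_ofReal (gpd_aux_prod x₁ x₂ x₃ k σ s T h12 h23 hT hk hσ hs)

lemma gpd_aux_mid (x₁ x₂ x₃ k T : ℝ) (h12 : x₁ < x₂) (h23 : x₂ < x₃)
    (hT : T = x₃ - x₁ + 1) (hk : 1 < k) :
    ENNReal.ofReal (T⁻¹ ^ 5 / 3) * ENNReal.ofReal k⁻¹ ≤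
    ∫⁻ σ in Ioi (0 : ℝ), ENNReal.ofReal (1 / σ) * ∫⁻ μ : ℝ, ENNReal.ofReal
          (gpdDensity μ σ (-k) x₁ * gpdDensity μ σ (-k) x₂ * gpdDensity μ σ (-k) x₃) := by
  have hk0 : 0 < k := by linarith
  have hT1 : 1 < T := by linarith
  have hT0 : 0 < T := by linarith
  have hkT : 0 < k * T := by positivity
  have hc : 0 ≤ k⁻¹ ^ 2 * k ^ (3 / k) * T⁻¹ ^ 2 := by positivity
  refine le_trans ?_ (lintegral_mono_set (Ioi_subset_Ioi hkT.le))
  have step : ENNReal.ofReal (k⁻¹ ^ 2 * k ^ (3 / k) * T⁻¹ ^ 2) *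
      ENNReal.ofReal ((k * T) ^ (-(3 / k)) * (k / 3)) ≤
      ∫⁻ σ in Ioi (k * T), ENNReal.ofReal (1 / σ) * ∫⁻ μ : ℝ, ENNReal.ofReal
          (gpdDensity μ σ (-k) x₁ * gpdDensity μ σ (-k) x₂ * gpdDensity μ σ (-k) x₃) := by
    rw [← gpd_aux_int_σ k (k * T) hk0 hkT, ← lintegral_const_mul' _ _ ENNReal.ofReal_ne_top]
    apply setLIntegral_mono' measurableSet_Ioi
    intro σ hσ
    have hσ0 : 0 < σ := hkT.trans hσ
    refine le_trans (le_of_eq ?_)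
      (mul_le_mul_right (gpd_aux_inner x₁ x₂ x₃ k σ T h12 h23 hT hk hσ) _)
    rw [← ENNReal.ofReal_mul hc, ← ENNReal.ofReal_mul (by positivity)]
    congr 1
    rw [show -1 - 3 / k = -(3 / k) - 1 by ring, Real.rpow_sub_one hσ0.ne']
    field_simp
  refine le_trans ?_ step
  rw [← ENNReal.ofReal_mul (by positivity), ← ENNReal.ofReal_mul hc]
  apply ENNReal.ofReal_le_ofReal
  have hTb : T⁻¹ ^ 3 ≤ T ^ (-(3 / k)) := by
    rw [← Real.rpow_natCast, Real.inv_rpow hT0.le, ← Real.rpow_neg hT0.le]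
    apply Real.rpow_le_rpow_of_exponent_le hT1.le
    have : 3 / k ≤ 3 := by rw [div_le_iff₀ hk0]; linarith
    push_cast
    linarith
  have hkk : k ^ (3 / k) * k ^ (-(3 / k)) = 1 := by
    rw [← Real.rpow_add hk0, add_neg_cancel, Real.rpow_zero]
  rw [Real.mul_rpow hk0.le hT0.le]
  calc T⁻¹ ^ 5 / 3 * k⁻¹ = T⁻¹ ^ 2 / 3 * k⁻¹ * T⁻¹ ^ 3 := by ring
    _ ≤ T⁻¹ ^ 2 / 3 * k⁻¹ * T ^ (-(3 / k)) := by gcongr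
    _ = (k ^ (3 / k) * k ^ (-(3 / k))) * (T⁻¹ ^ 2 / 3 * (k⁻¹ ^ 2 * k) * T ^ (-(3 / k))) := by
        rw [hkk, show k⁻¹ ^ 2 * k = k⁻¹ by field_simp]; ring
    _ = _ := by ring

lemma gpd_aux_div : ∫⁻ k in Ioi (1:ℝ), ENNReal.ofReal k⁻¹ = ⊤ := by
  by_contra h
  apply not_integrableOn_Ioi_inv (a := 1)
  refine ⟨measurable_inv.aestronglyMeasurable, ?_⟩
  rw [hasFiniteIntegral_iff_ofReal]
  · exact lt_top_iff_ne_top.2 h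
  · filter_upwards [ae_restrict_mem measurableSet_Ioi] with s hs
    exact inv_nonneg.2 (zero_le_one.trans (le_of_lt hs))

/-- For three distinct GPD observations, the marginal likelihood under the improper prior
`Π₀(μ, σ, ξ) = 1/σ`, uniform in the tail parameter `ξ`, diverges: the posterior on
`(μ, σ, ξ)` is improper in the `N = 3` GPD case. -/
theorem gpd_posterior_improper_uniform_xi_prior
    (x₁ x₂ x₃ : ℝ) (h12 : x₁ < x₂) (h23 : x₂ < x₃) :
    (∫⁻ ξ : ℝ, ∫⁻ σ in Ioi (0 : ℝ), ENNReal.ofReal (1 / σ) *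
        ∫⁻ μ : ℝ, ENNReal.ofReal
          (gpdDensity μ σ ξ x₁ * gpdDensity μ σ ξ x₂ * gpdDensity μ σ ξ x₃)) = ⊤ := by
  rw [eq_top_iff, ← lintegral_neg_eq_self]
  refine le_trans ?_ (setLIntegral_le_lintegral (Ioi (1:ℝ)) _)
  have hT : 0 < x₃ - x₁ + 1 := by linarith
  have h : ∫⁻ k in Ioi (1:ℝ), ENNReal.ofReal ((x₃ - x₁ + 1)⁻¹ ^ 5 / 3) * ENNReal.ofReal k⁻¹ = ⊤ := by
    rw [lintegral_const_mul' _ _ ENNReal.ofReal_ne_top, gpd_aux_div]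
    apply ENNReal.mul_top
    rw [Ne, ENNReal.ofReal_eq_zero, not_le]
    positivity
  rw [← h]
  apply setLIntegral_mono' measurableSet_Ioi
  intro k hk
  exact gpd_aux_mid x₁ x₂ x₃ k _ h12 h23 rfl hk
end
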